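/- arXiv:2001.02511 — 7 statements merged into one kernel-verified Lean document; each statement's English description precedes it below -/
import Mathlib

section
/- If w = (w_1, …, w_N) is a process function, then each component w_i is independent of the output of its own region: for every i and every pair of output tuples x, x' with x_j = x'_j for all j ≠ i, one has w_i(x) = w_i(x'). Hence an observer in a local region cannot signal to their own past. -/
/-- If `w` is a process function (unique fixed point condition), then each
component `w_i` is independent of the output of its own region. -/
theorem process_function_no_self_signalling
    {N : ℕ} (hN : 1 ≤ N) (X A : Fin N → Type*)
    [∀ i, Nonempty (X i)] [∀ i, Nonempty (A i)]
    (w : ∀ i : Fin N, (∀ j, X j) → A i)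
    (hw : ∀ f : ∀ i, A i → X i, ∃! a : ∀ i, A i,
        ∀ i, w i (fun j => f j (a j)) = a i) :
    ∀ i : Fin N, ∀ x x' : ∀ j, X j,
      (∀ j, j ≠ i → x j = x' j) → w i x = w i x' := by
  classical
  intro i x x' hx
  by_contra hne
  obtain ⟨a, ha, -⟩ := hw (fun j b => if j = i ∧ HEq b (w i x) then x' j else x j)
  have hi := ha i
  by_cases h : a i = w i x
  · have e : (fun j => if j = i ∧ HEq (a j) (w i x) then x' j else x j) = x' := by
      funext j
      by_cases hj : j = i
      · subst hj
        simp [h]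
      · simp [hj, hx j hj]
    have hi2 : w i (fun j => if j = i ∧ HEq (a j) (w i x) then x' j else x j) = a i := hi
    rw [e] at hi2
    exact hne (h.symm.trans hi2.symm)
  · have e : (fun j => if j = i ∧ HEq (a j) (w i x) then x' j else x j) = x := by
      funext j
      by_cases hj : j = i
      · subst hj
        simp [h]
      · simp [hj]
    have hi2 : w i (fun j => if j = i ∧ HEq (a j) (w i x) then x' j else x j) = a i := hi
    rw [e] at hi2
    exact h hi2.symm
end

section
/- (Lemma 1, part (i).) Let w = (w_1, …, w_N) with each w_i independent of x_i, regarded as functions w_i : 𝒳_{∖i} → 𝒜_i, where N ≥ 2. If w is a process function, then for every region i and every local operation f_i : 𝒜_i → 𝒳_i, the reduced function w^{f_i} on the remaining N−1 regions is also a process function. -/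
/-- A family of functions `w_i : 𝒳_{∖i} → 𝒜_i` (each taking the outputs of all the other
regions) is a process function if for every family of local operations there is a unique
fixed point. -/
def IsProcessRes {ι : Type*} {X A : ι → Type*}
    (w : ∀ i : ι, (∀ j : {j : ι // j ≠ i}, X j.1) → A i) : Prop :=
  ∀ f : ∀ i, A i → X i, ∃! a : ∀ i, A i,
    ∀ i, w i (fun j => f j.1 (a j.1)) = a i

/-- Process-function condition for a family of functions whose components take the outputs
of all regions (full tuples). -/
def IsProcessFull {ι : Type*} {X A : ι → Type*}
    (w : ∀ i : ι, (∀ j, X j) → A i) : Prop :=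
  ∀ f : ∀ i, A i → X i, ∃! a : ∀ i, A i,
    ∀ i, w i (fun j => f j (a j)) = a i

/-- The reduced function `w^{f_i}` on the remaining regions, obtained by fixing the local
operation of region `i` to `fi`:  `w^{f_i}_j(x_{∖i}) := w_j(x_{∖i}, f_i(w_i(x_{∖i})))`. -/
def reduceOp {ι : Type*} [DecidableEq ι] {X A : ι → Type*}
    (w : ∀ i : ι, (∀ j : {j : ι // j ≠ i}, X j.1) → A i) (i : ι) (fi : A i → X i) :
    ∀ j : {j : ι // j ≠ i}, (∀ k : {k : ι // k ≠ i}, X k.1) → A j.1 :=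
  fun j x => w j.1 (fun k =>
    if h : k.1 = i then cast (congrArg X h).symm (fi (w i x)) else x ⟨k.1, h⟩)

/-- Lemma 1, part (i): if `w` is a process function, then every reduced
function `w^{f_i}` is a process function on the remaining `N−1` regions. -/
theorem reduced_of_process
    {N : ℕ} (hN : 2 ≤ N) (X A : Fin N → Type*)
    [∀ i, Nonempty (X i)] [∀ i, Nonempty (A i)]
    (w : ∀ i : Fin N, (∀ j : {j : Fin N // j ≠ i}, X j.1) → A i)
    (hw : IsProcessRes w) (i : Fin N) (fi : A i → X i) :
    IsProcessFull (ι := {j : Fin N // j ≠ i})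
      (X := fun j => X j.1) (A := fun j => A j.1) (reduceOp w i fi) := by
  intro f
  obtain ⟨F, hFi, hFj⟩ : ∃ F : ∀ k, A k → X k, F i = fi ∧
      ∀ (k : Fin N) (h : k ≠ i), F k = f ⟨k, h⟩ := by
    refine ⟨fun k => if h : k = i then h ▸ fi else f ⟨k, h⟩, by simp, ?_⟩
    intro k h
    simp [h]
  have key : ∀ (a : ∀ k, A k) (j : {j : Fin N // j ≠ i}),
      w i (fun k => F k.1 (a k.1)) = a i →
      reduceOp w i fi j (fun k => f k (a k.1)) = w j.1 (fun k => F k.1 (a k.1)) := by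
    intro a j hi
    have e : (fun k : {k : Fin N // k ≠ i} => F k.1 (a k.1)) = fun k => f k (a k.1) := by
      funext k
      rw [hFj k.1 k.2]
    rw [e] at hi
    unfold reduceOp
    congr 1
    funext k
    obtain ⟨k, hk⟩ := k
    by_cases h : k = i
    · subst h
      simp [hi, hFi]
    · simp [h, hFj k h]
  obtain ⟨a, ha, hu⟩ := hw F
  refine ⟨fun j => a j.1, fun j => (key a j (ha i)).trans (ha j.1), ?_⟩
  intro b hb
  obtain ⟨c, hci, hcj⟩ : ∃ c : ∀ k, A k, c i = w i (fun k => f k (b k)) ∧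
      ∀ k : {k : Fin N // k ≠ i}, c k.1 = b k := by
    refine ⟨fun k => if h : k = i then h ▸ w i (fun k => f k (b k)) else b ⟨k, h⟩, by simp, ?_⟩
    intro k
    simp [k.2]
  have hbc : b = fun k : {k : Fin N // k ≠ i} => c k.1 := funext fun k => (hcj k).symm
  subst hbc
  have hi : w i (fun k => F k.1 (c k.1)) = c i := by
    rw [hci]
    congr 1
    funext k
    rw [hFj k.1 k.2]
  have hc : c = a := by
    apply hu
    intro k
    by_cases h : k = i
    · subst h
      exact hi
    · exact (key c ⟨k, h⟩ hi).symm.trans (hb ⟨k, h⟩)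
  rw [hc]
end

section
/- (Lemma 1, part (ii).) Let w = (w_1, …, w_N) with each w_i independent of x_i, regarded as functions w_i : 𝒳_{∖i} → 𝒜_i, where N ≥ 2. If there exists a region i such that for every local operation f_i : 𝒜_i → 𝒳_i the reduced function w^{f_i} is a process function on the remaining N−1 regions, then w itself is a process function. -/
theorem reduceOp_key {ι : Type*} [DecidableEq ι] {X A : ι → Type*}
    (w : ∀ i : ι, (∀ j : {j : ι // j ≠ i}, X j.1) → A i) (i : ι) (f : ∀ i, A i → X i)
    (a : ∀ i, A i) (ha : w i (fun j => f j.1 (a j.1)) = a i) (j : {j : ι // j ≠ i}) :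
    reduceOp w i (f i) j (fun k => f k.1 (a k.1)) = w j.1 (fun k => f k.1 (a k.1)) := by
  unfold reduceOp
  congr 1
  funext k
  obtain ⟨k, hk⟩ := k
  by_cases h : k = i
  · subst h
    simp [ha]
  · simp [h]

/-- Lemma 1, part (ii): if there exists a region `i` such that for every local
operation `f_i` the reduced function `w^{f_i}` is a process function on the remaining `N−1`
regions, then `w` itself is a process function. -/
theorem process_of_reduced
    {N : ℕ} (hN : 2 ≤ N) (X A : Fin N → Type*)
    [∀ i, Nonempty (X i)] [∀ i, Nonempty (A i)]
    (w : ∀ i : Fin N, (∀ j : {j : Fin N // j ≠ i}, X j.1) → A i)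
    (h : ∃ i : Fin N, ∀ fi : A i → X i,
      IsProcessFull (ι := {j : Fin N // j ≠ i})
        (X := fun j => X j.1) (A := fun j => A j.1) (reduceOp w i fi)) :
    IsProcessRes w := by
  obtain ⟨i, h⟩ := h
  intro f
  obtain ⟨b, hb, hu⟩ := h (f i) (fun j => f j.1)
  let a : ∀ k, A k := fun k =>
    if h : k = i then cast (congrArg A h).symm (w i (fun j => f j.1 (b j))) else b ⟨k, h⟩
  have hab : ∀ j : {j : Fin N // j ≠ i}, a j.1 = b j := fun j => by
    simp [a, j.2]
  have hai : w i (fun j => f j.1 (a j.1)) = a i := by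
    simp only [hab]
    simp [a]
  refine ⟨a, ?_, ?_⟩
  · intro k
    by_cases hk : k = i
    · subst hk
      exact hai
    · have h1 := reduceOp_key w i f a hai ⟨k, hk⟩
      have h2 := hb ⟨k, hk⟩
      simp only [hab] at h1
      rw [← h1]
      exact h2.trans (hab ⟨k, hk⟩).symm
  · intro c hc
    have hcb := hu (fun j => c j.1) (fun j =>
      (reduceOp_key w i f c (hc i) j).trans (hc j.1))
    have hca : ∀ j : {j : Fin N // j ≠ i}, c j.1 = a j.1 := fun j =>
      (congrFun hcb j).trans (hab j).symm
    funext k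
    by_cases hk : k = i
    · subst hk
      rw [← hc k, ← hai]
      simp only [hca]
    · exact hca ⟨k, hk⟩
end

section
/- (Single-region characterisation.) A function w : 𝒳 → 𝒜 on a single region (with 𝒳 and 𝒜 nonempty) is a process function, i.e., for every f : 𝒜 → 𝒳 there is a unique a ∈ 𝒜 with w(f(a)) = a, if and only if w is constant. -/
/-- single-region characterisation: a function `w : 𝒳 → 𝒜` on a single region
is a process function (for every local operation `f` there is a unique `a` with `w(f(a)) = a`)
if and only if `w` is constant. -/
theorem single_region_process_iff_constant
    (X A : Type*) [Nonempty X] [Nonempty A] (w : X → A) :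
    (∀ f : A → X, ∃! a : A, w (f a) = a) ↔ (∃ c : A, ∀ x : X, w x = c) := by
  classical
  constructor
  · intro h
    obtain ⟨x⟩ := ‹Nonempty X›
    refine ⟨w x, fun y => ?_⟩
    obtain ⟨a, ha, -⟩ := h (fun a => if a = w x then y else x)
    by_cases hax : a = w x
    · simp only [hax, if_true] at ha
      exact ha
    · simp only [hax, if_false] at ha
      exact absurd ha.symm hax
  · rintro ⟨c, hc⟩ f
    exact ⟨c, hc _, fun a ha => ha.symm.trans (hc _)⟩
end

section
/- (Bipartite characterisation.) A pair of functions w_1, w_2 : 𝒳_1 × 𝒳_2 → 𝒜_1, 𝒜_2 (with all state spaces nonempty) is a process function if and only if: (i) w_1(x_1, x_2) = w_1(x_2) depends only on x_2, (ii) w_2(x_1, x_2) = w_2(x_1) depends only on x_1, and (iii) at least one of the two functions w_1(x_2), w_2(x_1) is constant. In particular, bipartite process functions allow at most one-way signalling. -/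
/-- bipartite characterisation: a pair `(w_1, w_2)` is a process function iff
`w_1` depends only on `x_2`, `w_2` depends only on `x_1`, and at least one of them is
constant; in particular at most one-way signalling is possible. -/
theorem bipartite_process_characterisation
    (X₁ X₂ A₁ A₂ : Type*) [Nonempty X₁] [Nonempty X₂] [Nonempty A₁] [Nonempty A₂]
    (w₁ : X₁ → X₂ → A₁) (w₂ : X₁ → X₂ → A₂) :
    (∀ (f₁ : A₁ → X₁) (f₂ : A₂ → X₂), ∃! a : A₁ × A₂,
        w₁ (f₁ a.1) (f₂ a.2) = a.1 ∧ w₂ (f₁ a.1) (f₂ a.2) = a.2) ↔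
      ((∀ x₁ x₁' : X₁, ∀ x₂ : X₂, w₁ x₁ x₂ = w₁ x₁' x₂) ∧
       (∀ x₁ : X₁, ∀ x₂ x₂' : X₂, w₂ x₁ x₂ = w₂ x₁ x₂') ∧
       ((∃ c : A₁, ∀ x₁ x₂, w₁ x₁ x₂ = c) ∨ (∃ c : A₂, ∀ x₁ x₂, w₂ x₁ x₂ = c))) := by
  classical
  constructor
  · intro h
    have h1 : ∀ x₁ x₁' : X₁, ∀ x₂ : X₂, w₁ x₁ x₂ = w₁ x₁' x₂ := by
      intro x x' y
      by_contra hne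
      have hq : ¬ (w₁ x' y = w₁ x y) := fun e => hne e.symm
      have hu := (h (fun a => if a = w₁ x y then x else x') (fun _ => y)).unique
        (y₁ := (w₁ x y, w₂ x y)) (y₂ := (w₁ x' y, w₂ x' y))
        (by simp) (by simp [hq])
      exact hne (congrArg Prod.fst hu)
    have h2 : ∀ x₁ : X₁, ∀ x₂ x₂' : X₂, w₂ x₁ x₂ = w₂ x₁ x₂' := by
      intro x y y'
      by_contra hne
      have hq : ¬ (w₂ x y' = w₂ x y) := fun e => hne e.symm
      have hu := (h (fun _ => x) (fun a => if a = w₂ x y then y else y')).unique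
        (y₁ := (w₁ x y, w₂ x y)) (y₂ := (w₁ x y', w₂ x y'))
        (by simp) (by simp [hq])
      exact hne (congrArg Prod.snd hu)
    refine ⟨h1, h2, ?_⟩
    obtain ⟨x⟩ := ‹Nonempty X₁›
    obtain ⟨y⟩ := ‹Nonempty X₂›
    by_contra hc
    push Not at hc
    obtain ⟨hc1, hc2⟩ := hc
    obtain ⟨z, y', hy⟩ := hc1 (w₁ x y)
    obtain ⟨x', z', hx⟩ := hc2 (w₂ x y)
    rw [h1 z x' y'] at hy
    rw [h2 x' z' y'] at hx
    have hu := (h (fun a => if a = w₁ x y then x else x')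
        (fun a => if a = w₂ x y then y else y')).unique
        (y₁ := (w₁ x y, w₂ x y)) (y₂ := (w₁ x' y', w₂ x' y'))
        (by simp) (by simp [hx, hy])
    exact hy (congrArg Prod.fst hu).symm
  · rintro ⟨h1, h2, ⟨c, hc⟩ | ⟨c, hc⟩⟩ f₁ f₂
    · obtain ⟨y⟩ := ‹Nonempty X₂›
      refine ⟨(c, w₂ (f₁ c) y), ⟨hc _ _, h2 _ _ _⟩, ?_⟩
      rintro ⟨a, b⟩ ⟨ha, hb⟩
      have e : a = c := ha.symm.trans (hc _ _)
      subst e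
      exact Prod.ext rfl (hb.symm.trans (h2 _ _ _))
    · obtain ⟨x⟩ := ‹Nonempty X₁›
      refine ⟨(w₁ x (f₂ c), c), ⟨h1 _ _ _, hc _ _⟩, ?_⟩
      rintro ⟨a, b⟩ ⟨ha, hb⟩
      have e : b = c := hb.symm.trans (hc _ _)
      subst e
      exact Prod.ext (ha.symm.trans (h1 _ _ _)) rfl
end

section
/- (At most conditional one-way signalling.) Let w = (w_1, …, w_N), N ≥ 3, be a process function with w_i : 𝒳_{∖i} → 𝒜_i. Then for every pair of distinct regions i, j and every fixed assignment x_{∖{i,j}} of outputs to the other regions, it is not the case that both i signals to j conditioned on x_{∖{i,j}} and j signals to i conditioned on x_{∖{i,j}}; i.e., at least one of the functions x_j ↦ w_i(x_j, x_{∖{i,j}}) and x_i ↦ w_j(x_i, x_{∖{i,j}}) is constant. -/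
theorem process_aux {ι : Type*} {X A : ι → Type*}
    (w : ∀ i : ι, (∀ j : {j : ι // j ≠ i}, X j.1) → A i) (hw : IsProcessRes w)
    (x y : ∀ k, X k)
    (h : ∀ k, x k = y k ∨ w k (fun l => x l.1) ≠ w k (fun l => y l.1)) (i : ι) :
    w i (fun l => x l.1) = w i (fun l => y l.1) := by
  classical
  let f : ∀ k, A k → X k := fun k a => if a = w k (fun l => x l.1) then x k else y k
  have hx : ∀ k, f k (w k (fun l => x l.1)) = x k := fun k => if_pos rfl
  have hy : ∀ k, f k (w k (fun l => y l.1)) = y k := by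
    intro k
    rcases h k with h | h
    · simp only [f, h, ite_self]
    · exact if_neg (Ne.symm h)
  have := (hw f).unique (y₁ := fun k => w k (fun l => x l.1))
    (y₂ := fun k => w k (fun l => y l.1))
    (fun k => by simp only [hx]) (fun k => by simp only [hy])
  exact congrFun this i

/-- at most conditional one-way signalling: if `w` is a process function on
`N ≥ 3` regions, then for every pair of distinct regions `i, j` and every fixed assignment
of outputs to the other regions, at least one of the functions `x_j ↦ w_i(x_j, x_{∖{i,j}})`
and `x_i ↦ w_j(x_i, x_{∖{i,j}})` is constant, i.e. it is not the case that both `i` signals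
to `j` and `j` signals to `i` conditioned on `x_{∖{i,j}}`. -/
theorem at_most_one_way_conditional_signalling
    {N : ℕ} (hN : 3 ≤ N) (X A : Fin N → Type*)
    [∀ i, Nonempty (X i)] [∀ i, Nonempty (A i)]
    (w : ∀ i : Fin N, (∀ j : {j : Fin N // j ≠ i}, X j.1) → A i)
    (hw : IsProcessRes w)
    (i j : Fin N) (hij : i ≠ j)
    (z : ∀ k : {k : Fin N // k ≠ i ∧ k ≠ j}, X k.1) :
    (∀ xj xj' : X j,
        w i (fun k => if h : k.1 = j then cast (congrArg X h).symm xj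
                      else z ⟨k.1, ⟨k.2, h⟩⟩)
      = w i (fun k => if h : k.1 = j then cast (congrArg X h).symm xj'
                      else z ⟨k.1, ⟨k.2, h⟩⟩)) ∨
    (∀ xi xi' : X i,
        w j (fun k => if h : k.1 = i then cast (congrArg X h).symm xi
                      else z ⟨k.1, ⟨h, k.2⟩⟩)
      = w j (fun k => if h : k.1 = i then cast (congrArg X h).symm xi'
                      else z ⟨k.1, ⟨h, k.2⟩⟩)) := by
  by_contra hc
  push Not at hc
  obtain ⟨⟨p, p', hp⟩, ⟨q, q', hq⟩⟩ := hc
  let x : X j → X i → ∀ k, X k := fun p q k =>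
    if hi : k = i then cast (congrArg X hi).symm q
    else if hj : k = j then cast (congrArg X hj).symm p else z ⟨k, hi, hj⟩
  have e1 : ∀ p q, (fun l : {l : Fin N // l ≠ i} => x p q l.1) =
      (fun k : {l : Fin N // l ≠ i} => if h : k.1 = j then cast (congrArg X h).symm p
                      else z ⟨k.1, ⟨k.2, h⟩⟩) := by
    intro p q
    funext l
    exact dif_neg l.2
  have e2 : ∀ p q, (fun l : {l : Fin N // l ≠ j} => x p q l.1) =
      (fun k : {l : Fin N // l ≠ j} => if h : k.1 = i then cast (congrArg X h).symm q
                      else z ⟨k.1, ⟨h, k.2⟩⟩) := by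
    intro p q
    funext l
    by_cases hl : l.1 = i
    · simp only [x, dif_pos hl]
    · simp only [x, dif_neg hl, dif_neg l.2]
  have key := process_aux w hw (x p q) (x p' q') (by
    intro k
    by_cases hi : k = i
    · subst hi
      right
      rw [e1, e1]
      exact hp
    · by_cases hj : k = j
      · subst hj
        right
        rw [e2, e2]
        exact hq
      · left
        simp only [x, dif_neg hi, dif_neg hj]) i
  rw [e1, e1] at key
  exact hp key
end

section
/- (Inequivalence of equations (10) and (11) under relabelling.) Let w be the quadripartite function on bits defined by a_1 = x_4·(x_2⊕1)·(x_3⊕1), a_2 = x_1·(x_4⊕1)·(x_3⊕1), a_3 = x_2·(x_1⊕1)·(x_4⊕1), a_4 = x_3·(x_2⊕1)·(x_1⊕1), and let v be the quadripartite function on bits defined by a_1 = x_2·(x_3⊕x_4), a_2 = x_3·(x_4·(x_1⊕1)⊕1), a_3 = x_4·(x_1⊕1)·(x_2⊕1), a_4 = x_1·(x_2⊕1)·(x_3⊕1). Then w and v are not equivalent under relabelling: there exist no permutation π of {1,2,3,4} and no bijections α_1, …, α_4 : {0,1} → {0,1} (input relabellings) and β_1, …, β_4 : {0,1} → {0,1}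 (output relabellings) such that for all (x_1, x_2, x_3, x_4) ∈ {0,1}^4 and all i, α_i(w_i(x_{∖i})) = v_{π(i)}(y_{∖π(i)}) where y_{π(j)} = β_j(x_j) for every j. -/
/-- The quadripartite process function of equation (10), with bits as `Bool` and regions
`1,2,3,4` indexed by `0,1,2,3 : Fin 4`; component `i` ignores its own slot:
`a₁ = x₄·(x₂⊕1)·(x₃⊕1)`, `a₂ = x₁·(x₄⊕1)·(x₃⊕1)`, `a₃ = x₂·(x₁⊕1)·(x₄⊕1)`,
`a₄ = x₃·(x₂⊕1)·(x₁⊕1)`. -/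
def W (i : Fin 4) (x : Fin 4 → Bool) : Bool :=
  if i = 0 then x 3 && (!(x 1)) && (!(x 2))
  else if i = 1 then x 0 && (!(x 3)) && (!(x 2))
  else if i = 2 then x 1 && (!(x 0)) && (!(x 3))
  else x 2 && (!(x 1)) && (!(x 0))

/-- The quadripartite process function of equation (11):
`a₁ = x₂·(x₃⊕x₄)`, `a₂ = x₃·(x₄·(x₁⊕1)⊕1)`, `a₃ = x₄·(x₁⊕1)·(x₂⊕1)`,
`a₄ = x₁·(x₂⊕1)·(x₃⊕1)`. -/
def V (i : Fin 4) (x : Fin 4 → Bool) : Bool :=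
  if i = 0 then x 1 && (xor (x 2) (x 3))
  else if i = 1 then x 2 && (!(x 3 && (!(x 0))))
  else if i = 2 then x 3 && (!(x 0)) && (!(x 1))
  else x 0 && (!(x 1)) && (!(x 2))

theorem card_V0 : (Finset.univ.filter (fun y : Fin 4 → Bool => V 0 y = true)).card = 4 := by
  decide

theorem card_W : ∀ (b : Bool) (i : Fin 4),
    (Finset.univ.filter (fun x : Fin 4 → Bool => W i x = b)).card ≠ 4 := by
  decide

/-- inequivalence of equations (10) and (11) under relabelling: there are no
permutation `π` of the regions, output relabellings `β_j` and input relabellings `α_i`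
(bijections of the bit) such that `α_i(w_i(x_{∖i})) = v_{π(i)}(y_{∖π(i)})` for all `x`,
where `y_{π(j)} = β_j(x_j)`. -/
theorem eq10_eq11_inequivalent :
    ¬ ∃ (π : Equiv.Perm (Fin 4)) (α β : Fin 4 → (Bool → Bool)),
        (∀ i, Function.Bijective (α i)) ∧
        (∀ j, Function.Bijective (β j)) ∧
        (∀ (x : Fin 4 → Bool) (i : Fin 4),
          α i (W i x) = V (π i) (fun m => β (π.symm m) (x (π.symm m)))) := by
  rintro ⟨π, α, β, hα, hβ, h⟩
  have hT : Function.Bijective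
      (fun (x : Fin 4 → Bool) (m : Fin 4) => β (π.symm m) (x (π.symm m))) := by
    rw [← Finite.injective_iff_bijective]
    intro x y hxy
    funext j
    have := congrFun hxy (π j)
    simp only [Equiv.symm_apply_apply] at this
    exact (hβ j).1 this
  obtain ⟨b, hb⟩ := (hα (π.symm 0)).2 true
  apply card_W b (π.symm 0)
  refine Eq.trans ?_ card_V0
  refine Finset.card_bijective _ hT ?_
  intro x
  have hx := h x (π.symm 0)
  rw [Equiv.apply_symm_apply] at hx
  simp only [Finset.mem_filter, Finset.mem_univ, true_and]
  rw [← hx, ← hb]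
  exact (hα (π.symm 0)).1.eq_iff.symm
end
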